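/- arXiv:1303.3740 — 3 statements merged into one kernel-verified Lean document; each statement's English description precedes it below -/
import Mathlib

section
/- Let Γ0, Γ1 be complex d×d matrices, and let (λ₁,u₁), …, (λ_d,u_d) be d generalized eigenpairs of the palindromic quadratic eigenvalue problem, i.e. (λᵢ² Γ1 + λᵢ Γ0 + Γ1ᵀ)uᵢ = 0 with uᵢ ≠ 0 for each i. Let U be the d×d matrix whose i-th column is uᵢ and let D be the diagonal matrix with diagonal entries λ₁,…,λ_d, and assume U is invertible. Then B := (Uᵀ)⁻¹ D Uᵀ satisfies the palindromic matrix equation Γ1ᵀ + Γ0 Bᵀ + Γ1 (Bᵀ)² = 0. -/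
/-!
The columns of `U` are eigenvectors of `Bᵀ = U D U⁻¹`. On an eigenvector `v` of a matrix `X`, with
eigenvalue `c`, a polynomial in `X` with matrix coefficients on the left acts as its value at the
scalar matrix `c`. For the quadratic matrix polynomial of the equation, this value kills the columns
of `U` by the eigenpair equations, and the columns of an invertible matrix span the whole space.
-/

open Matrix

section CommSemiring

variable {R m n : Type*} [CommSemiring R] [Fintype m] [Fintype n]

theorem mul_diagonal_mul_mulVec_col [DecidableEq n] {U : Matrix m n R} {V : Matrix n m R}
    (hVU : V * U = 1) (c : n → R) (i : n) :
    (U * diagonal c * V) *ᵥ U.col i = c i • U.col i := by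
  have hmul : U * diagonal c * V * U = U * diagonal c := by
    rw [Matrix.mul_assoc, hVU, Matrix.mul_one]
  calc (U * diagonal c * V) *ᵥ U.col i
      = (U * diagonal c).col i := congrArg (fun M ↦ M.col i) hmul
    _ = c i • U.col i := by
      ext r
      simp [mul_comm]

variable [DecidableEq m]

theorem pow_mulVec_of_mulVec_eq_smul {X : Matrix m m R} {v : m → R} {c : R}
    (h : X *ᵥ v = c • v) (k : ℕ) : X ^ k *ᵥ v = c ^ k • v := by
  induction k with
  | zero => simp
  | succ k ih => rw [pow_succ, ← mulVec_mulVec, h, mulVec_smul, ih, smul_smul, pow_succ']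

-- `Polynomial.eval` keeps the coefficients to the left of the powers of the argument, also when the
-- two do not commute.
theorem eval_mulVec_of_mulVec_eq_smul (P : Polynomial (Matrix m m R)) {X : Matrix m m R}
    {v : m → R} {c : R} (h : X *ᵥ v = c • v) :
    P.eval X *ᵥ v = P.eval (scalar m c) *ᵥ v := by
  induction P using Polynomial.induction_on' with
  | add P Q hP hQ => simp only [Polynomial.eval_add, add_mulVec, hP, hQ]
  | monomial k A =>
    simp only [Polynomial.eval_monomial, ← mulVec_mulVec, pow_mulVec_of_mulVec_eq_smul h,
      pow_mulVec_of_mulVec_eq_smul (diagonal_const_mulVec c v), scalar_apply]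

theorem eq_zero_of_forall_mulVec_col_eq_zero {l : Type*} {M : Matrix l m R} {U : Matrix m n R}
    {V : Matrix n m R} (hUV : U * V = 1) (h : ∀ i, M *ᵥ U.col i = 0) : M = 0 := by
  have hMU : M * U = 0 := by
    ext r i
    exact congrFun (h i) r
  calc M = M * U * V := by rw [Matrix.mul_assoc, hUV, Matrix.mul_one]
    _ = 0 := by rw [hMU, Matrix.zero_mul]

theorem eval_mul_diagonal_mul_eq_zero [DecidableEq n] (P : Polynomial (Matrix m m R))
    {U : Matrix m n R} {V : Matrix n m R} (hUV : U * V = 1) (hVU : V * U = 1) {c : n → R}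
    (h : ∀ i, P.eval (scalar m (c i)) *ᵥ U.col i = 0) :
    P.eval (U * diagonal c * V) = 0 :=
  eq_zero_of_forall_mulVec_col_eq_zero hUV fun i ↦
    (eval_mulVec_of_mulVec_eq_smul P (mul_diagonal_mul_mulVec_col hVU c i)).trans (h i)

end CommSemiring

section CommRing

variable {R n : Type*} [CommRing R] [Fintype n] [DecidableEq n]

theorem transpose_transpose_inv_mul_diagonal_mul_transpose (U : Matrix n n R) (c : n → R) :
    (Uᵀ⁻¹ * diagonal c * Uᵀ)ᵀ = U * diagonal c * U⁻¹ := by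
  simp only [transpose_mul, transpose_transpose, diagonal_transpose, transpose_nonsing_inv,
    Matrix.mul_assoc]

theorem pme_solution_from_gen_eigenpairs_general (A₀ A₁ A₂ : Matrix n n R) {c : n → R}
    {U : Matrix n n R} (hU : IsUnit U.det)
    (h : ∀ i, (c i ^ 2 • A₂ + c i • A₁ + A₀) *ᵥ U.col i = 0) :
    A₀ + A₁ * (Uᵀ⁻¹ * diagonal c * Uᵀ)ᵀ + A₂ * (Uᵀ⁻¹ * diagonal c * Uᵀ)ᵀ ^ 2 = 0 := by
  let P : Polynomial (Matrix n n R) := .C A₀ + .C A₁ * .X + .C A₂ * .X ^ 2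
  have eval_P (X : Matrix n n R) : P.eval X = A₀ + A₁ * X + A₂ * X ^ 2 := by
    simp [P]
  have eval_P_scalar (a : R) : P.eval (scalar n a) = a ^ 2 • A₂ + a • A₁ + A₀ := by
    rw [eval_P, ← map_pow, scalar_apply, scalar_apply, ← smul_one_eq_diagonal,
      ← smul_one_eq_diagonal, mul_smul_one, mul_smul_one]
    abel
  rw [transpose_transpose_inv_mul_diagonal_mul_transpose, ← eval_P]
  refine eval_mul_diagonal_mul_eq_zero P (mul_nonsing_inv U hU) (nonsing_inv_mul U hU) fun i ↦ ?_
  rw [eval_P_scalar, h]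

end CommRing

/-- If `(λᵢ, uᵢ)`, `i = 1, …, d`, are generalized eigenpairs of the palindromic quadratic
eigenvalue problem `(λ² Γ1 + λ Γ0 + Γ1ᵀ) u = 0` and the matrix `U` of eigenvectors is
invertible, then `B = (Uᵀ)⁻¹ D Uᵀ` solves the palindromic matrix equation
`Γ1ᵀ + Γ0 Bᵀ + Γ1 (Bᵀ)² = 0`. -/
theorem pme_solution_from_gen_eigenpairs (d : ℕ) (Γ0 Γ1 : Matrix (Fin d) (Fin d) ℂ)
    (lam : Fin d → ℂ) (u : Fin d → Fin d → ℂ)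
    (hu : ∀ i, u i ≠ 0)
    (heig : ∀ i, ((lam i) ^ 2 • Γ1 + (lam i) • Γ0 + Γ1ᵀ).mulVec (u i) = 0)
    (U : Matrix (Fin d) (Fin d) ℂ) (hU : U = Matrix.of fun r i => u i r)
    (hUinv : IsUnit U.det)
    (B : Matrix (Fin d) (Fin d) ℂ) (hB : B = Uᵀ⁻¹ * Matrix.diagonal lam * Uᵀ) :
    Γ1ᵀ + Γ0 * Bᵀ + Γ1 * Bᵀ ^ 2 = 0 := by
  subst hU hB
  exact pme_solution_from_gen_eigenpairs_general Γ1ᵀ Γ0 Γ1 hUinv heig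
end

section
/- Let Γ0 and Γ1 be real d×d matrices with Γ0 symmetric and Γ1 invertible, and let P be the 2d×2d block matrix with blocks [[0, I], [−Γ1⁻¹Γ1ᵀ, −Γ1⁻¹Γ0]] (viewed as a complex matrix). If λ is a complex eigenvalue of P, then λ ≠ 0 and 1/λ is also an eigenvalue of P. -/
open Matrix

/-!
For `Q(μ) = μ² A + μ B + C` with `A` invertible, a block vector `(u, v)` is an eigenvector of the
block companion matrix for `μ` exactly when `v = μ u` and `Q(μ) u = 0`, so the eigenvalues are the
roots of `det Q`. If `C = Aᵀ` and `B` is symmetric, then `Q(μ⁻¹) = μ⁻² Q(μ)ᵀ`, so the nonzero roots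
come in pairs `(μ, μ⁻¹)`; and `det Q(0) = det Aᵀ` does not vanish.
-/

section QuadraticPencil

variable {n R : Type*} [CommRing R]

/-- The value at `μ` of the quadratic matrix polynomial with coefficients `A`, `B`, `C`, listed
from the leading one down. The roots `μ` of its determinant are the eigenvalues of the associated
quadratic eigenvalue problem. -/
def quadraticPencil (A B C : Matrix n n R) (μ : R) : Matrix n n R :=
  μ ^ 2 • A + μ • B + C

lemma quadraticPencil_zero (A B C : Matrix n n R) : quadraticPencil A B C 0 = C := by
  simp [quadraticPencil]

lemma transpose_quadraticPencil (A B C : Matrix n n R) (μ : R) :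
    (quadraticPencil A B C μ)ᵀ = quadraticPencil Aᵀ Bᵀ Cᵀ μ := by
  simp only [quadraticPencil, transpose_add, transpose_smul]

lemma quadraticPencil_reverse (A B C : Matrix n n R) {μ ν : R} (h : μ * ν = 1) :
    quadraticPencil C B A ν = ν ^ 2 • quadraticPencil A B C μ := by
  have h_sq : ν ^ 2 * μ ^ 2 = 1 := by rw [← mul_pow, mul_comm, h, one_pow]
  have h_lin : ν ^ 2 * μ = ν := by rw [pow_two, mul_assoc, mul_comm ν μ, h, mul_one]
  simp only [quadraticPencil, smul_add, smul_smul, h_sq, h_lin, one_smul]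
  abel

variable [Fintype n] [DecidableEq n]

lemma det_quadraticPencil_transpose_reverse (A : Matrix n n R) {B : Matrix n n R} (hB : B.IsSymm)
    {μ ν : R} (h : μ * ν = 1) :
    (quadraticPencil A B Aᵀ ν).det =
      (ν ^ 2) ^ Fintype.card n * (quadraticPencil A B Aᵀ μ).det :=
  calc (quadraticPencil A B Aᵀ ν).det
      = (quadraticPencil Aᵀ B A ν).det := by
        rw [← det_transpose, transpose_quadraticPencil, hB.eq, transpose_transpose]
    _ = (ν ^ 2) ^ Fintype.card n * (quadraticPencil A B Aᵀ μ).det := by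
        rw [quadraticPencil_reverse A B Aᵀ h, det_smul]

/-- The block companion matrix of the monic quadratic matrix polynomial `μ² + μ A⁻¹ B + A⁻¹ C`,
linearizing `quadraticPencil A B C`. It is meaningful only for invertible `A`, since otherwise
`A⁻¹ = 0`. -/
noncomputable def blockCompanion (A B C : Matrix n n R) : Matrix (n ⊕ n) (n ⊕ n) R :=
  fromBlocks 0 1 (-(A⁻¹ * C)) (-(A⁻¹ * B))

lemma blockCompanion_mulVec_elim (A B C : Matrix n n R) (u v : n → R) :
    blockCompanion A B C *ᵥ Sum.elim u v = Sum.elim v (-(A⁻¹ *ᵥ (C *ᵥ u + B *ᵥ v))) := by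
  simp only [blockCompanion, fromBlocks_mulVec, Sum.elim_comp_inl, Sum.elim_comp_inr, zero_mulVec,
    one_mulVec, zero_add, neg_mulVec, mulVec_add, mulVec_mulVec, neg_add]

lemma neg_inv_mulVec_eq_iff {A : Matrix n n R} (hA : IsUnit A.det) (x y : n → R) :
    -(A⁻¹ *ᵥ x) = y ↔ A *ᵥ y + x = 0 := by
  constructor
  · rintro rfl
    rw [mulVec_neg, mulVec_mulVec, mul_nonsing_inv A hA, one_mulVec, neg_add_cancel]
  · intro h
    rw [eq_neg_of_add_eq_zero_right h, mulVec_neg, mulVec_mulVec, nonsing_inv_mul A hA, one_mulVec,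
      neg_neg]

lemma blockCompanion_mulVec_elim_eq_smul_iff {A : Matrix n n R} (hA : IsUnit A.det)
    (B C : Matrix n n R) (μ : R) (u v : n → R) :
    blockCompanion A B C *ᵥ Sum.elim u v = μ • Sum.elim u v ↔
      v = μ • u ∧ quadraticPencil A B C μ *ᵥ u = 0 := by
  have smul_elim : μ • Sum.elim u v = Sum.elim (μ • u) (μ • v) := by
    ext (i | i) <;> rfl
  have pencil_mulVec :
      quadraticPencil A B C μ *ᵥ u = A *ᵥ (μ • μ • u) + (C *ᵥ u + B *ᵥ (μ • u)) := by
    simp only [quadraticPencil, add_mulVec, smul_mulVec, mulVec_smul, smul_smul, pow_two]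
    abel
  rw [blockCompanion_mulVec_elim, smul_elim, Sum.elim_eq_iff, neg_inv_mulVec_eq_iff hA]
  refine and_congr_right fun hv => ?_
  rw [hv, pencil_mulVec]

lemma exists_blockCompanion_eigenvector_iff [IsDomain R] {A : Matrix n n R} (hA : IsUnit A.det)
    (B C : Matrix n n R) (μ : R) :
    (∃ w ≠ 0, blockCompanion A B C *ᵥ w = μ • w) ↔ (quadraticPencil A B C μ).det = 0 := by
  rw [← exists_mulVec_eq_zero_iff]
  constructor
  · rintro ⟨w, hw, h⟩
    obtain ⟨u, v, rfl⟩ : ∃ u v, w = Sum.elim u v := ⟨_, _, (Sum.elim_comp_inl_inr w).symm⟩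
    obtain ⟨rfl, hu⟩ := (blockCompanion_mulVec_elim_eq_smul_iff hA B C μ u v).1 h
    refine ⟨u, ?_, hu⟩
    rintro rfl
    exact hw (by simp)
  · rintro ⟨u, hu, h⟩
    have hw : Sum.elim u (μ • u) ≠ 0 := fun hw => hu (funext fun i => congrFun hw (Sum.inl i))
    exact ⟨_, hw, (blockCompanion_mulVec_elim_eq_smul_iff hA B C μ u _).2 ⟨rfl, h⟩⟩

end QuadraticPencil

theorem companion_eigenvalue_pairing_general {n K : Type*} [Fintype n] [DecidableEq n] [Field K]
    {A B : Matrix n n K} (hA : IsUnit A.det) (hB : B.IsSymm) {μ : K} {w : n ⊕ n → K} (hw : w ≠ 0)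
    (heig : blockCompanion A B Aᵀ *ᵥ w = μ • w) :
    μ ≠ 0 ∧ ∃ w' ≠ 0, blockCompanion A B Aᵀ *ᵥ w' = (1 / μ) • w' := by
  have hdet : (quadraticPencil A B Aᵀ μ).det = 0 :=
    (exists_blockCompanion_eigenvector_iff hA B Aᵀ μ).1 ⟨w, hw, heig⟩
  have hμ : μ ≠ 0 := by
    rintro rfl
    rw [quadraticPencil_zero, det_transpose] at hdet
    exact hA.ne_zero hdet
  refine ⟨hμ, (exists_blockCompanion_eigenvector_iff hA B Aᵀ (1 / μ)).2 ?_⟩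
  rw [det_quadraticPencil_transpose_reverse A hB (mul_one_div_cancel hμ), hdet, mul_zero]

/-- For real `Γ0, Γ1` with `Γ0` symmetric and `Γ1` invertible, the complex eigenvalues of
the companion matrix `P = [[0, I], [−Γ1⁻¹Γ1ᵀ, −Γ1⁻¹Γ0]]` are nonzero and come in pairs
`(λ, 1/λ)`. -/
theorem companion_eigenvalue_pairing (d : ℕ) (Γ0 Γ1 : Matrix (Fin d) (Fin d) ℝ)
    (hΓ0 : Γ0.IsSymm) (hΓ1 : IsUnit Γ1.det)
    (P : Matrix (Fin d ⊕ Fin d) (Fin d ⊕ Fin d) ℂ)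
    (hP : P = Matrix.fromBlocks 0 1
      (-((Γ1.map Complex.ofReal)⁻¹ * (Γ1.map Complex.ofReal)ᵀ))
      (-((Γ1.map Complex.ofReal)⁻¹ * (Γ0.map Complex.ofReal))))
    (lam : ℂ) (w : Fin d ⊕ Fin d → ℂ) (hw : w ≠ 0) (heig : P.mulVec w = lam • w) :
    lam ≠ 0 ∧ ∃ w' : Fin d ⊕ Fin d → ℂ, w' ≠ 0 ∧ P.mulVec w' = (1 / lam) • w' := by
  subst hP
  exact companion_eigenvalue_pairing_general (Complex.ofRealHom.map_det Γ1 ▸ hΓ1.map _)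
    (hΓ0.map _) hw heig
end

section
/- Let Γ0, Γ1, Σ : ℝ → (real d×d matrices) be functions differentiable at a point t₀, with Σ(t) symmetric and invertible for all t in a neighborhood of t₀, and suppose Γ0(t) = Σ(t) + Γ1(t) Σ(t)⁻¹ Γ1(t)ᵀ holds in this neighborhood. Define B(t) = −Γ1(t) Σ(t)⁻¹ and write Σ̇, Γ̇0, Γ̇1 for the derivatives at t₀ and B = B(t₀). Then Σ̇ − B Σ̇ Bᵀ = Γ̇0 + Γ̇1 Bᵀ + B Γ̇1ᵀ. -/
open Matrix

attribute [local instance] Matrix.normedAddCommGroup Matrix.normedSpace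

/-!
With `B = -Γ1 Σ⁻¹` and `Σ` symmetric at `t₀`, the product rule and `(Σ⁻¹)˙ = -Σ⁻¹ Σ̇ Σ⁻¹` give
`(Γ1 Σ⁻¹ Γ1ᵀ)˙ = -Γ̇1 Bᵀ - B Σ̇ Bᵀ - B Γ̇1ᵀ`; it remains to differentiate the moment equation.

The sup norm on matrices is not submultiplicative, so the product and inverse rules for normed rings
do not apply to it. Products are differentiated entrywise, and inverses by letting `t → t₀` in
`(Σ(t)⁻¹ - Σ(t₀)⁻¹) / (t - t₀) = -Σ(t)⁻¹ ((Σ(t) - Σ(t₀)) / (t - t₀)) Σ(t₀)⁻¹`.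
-/

open Filter Topology

theorem slope_matrix_inv {k R n : Type*} [Field k] [CommRing R] [Algebra k R] [Fintype n]
    [DecidableEq n] {S : k → Matrix n n R} {t₀ t : k} (ht₀ : IsUnit (S t₀).det)
    (ht : IsUnit (S t).det) :
    slope (fun t ↦ (S t)⁻¹) t₀ t = -((S t)⁻¹ * slope S t₀ t * (S t₀)⁻¹) := by
  have hiff : IsUnit (S t) ↔ IsUnit (S t₀) := by simp only [isUnit_iff_isUnit_det, ht, ht₀]
  rw [slope_def_module, slope_def_module, inv_sub_inv hiff, ← neg_sub (S t) (S t₀)]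
  simp only [Matrix.mul_neg, Matrix.neg_mul, smul_neg, mul_smul_comm, smul_mul_assoc]

section MatrixDeriv

variable {𝕜 R l m n : Type*} [NontriviallyNormedField 𝕜] {t₀ : 𝕜}

theorem hasDerivAt_matrix [Finite n] [NormedAddCommGroup R] [NormedSpace 𝕜 R]
    {A : 𝕜 → Matrix m n R} {A' : Matrix m n R} :
    HasDerivAt A A' t₀ ↔ ∀ i j, HasDerivAt (fun t ↦ A t i j) (A' i j) t₀ := by
  have := Fintype.ofFinite n
  exact (hasDerivAt_pi (E' := fun _ ↦ n → R)).trans (forall_congr' fun _ ↦ hasDerivAt_pi)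

theorem hasDerivAt_matrix_transpose [Finite m] [Finite n] [NormedAddCommGroup R] [NormedSpace 𝕜 R]
    {A : 𝕜 → Matrix m n R} {A' : Matrix m n R} (hA : HasDerivAt A A' t₀) :
    HasDerivAt (fun t ↦ (A t)ᵀ) A'ᵀ t₀ :=
  hasDerivAt_matrix.2 fun i j ↦ hasDerivAt_matrix.1 hA j i

theorem hasDerivAt_matrix_mul [Fintype m] [Finite n] [NormedRing R] [NormedAlgebra 𝕜 R]
    {A : 𝕜 → Matrix l m R} {C : 𝕜 → Matrix m n R} {A' : Matrix l m R} {C' : Matrix m n R}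
    (hA : HasDerivAt A A' t₀) (hC : HasDerivAt C C' t₀) :
    HasDerivAt (fun t ↦ A t * C t) (A' * C t₀ + A t₀ * C') t₀ := by
  refine hasDerivAt_matrix.2 fun i k ↦ ?_
  have hsum : HasDerivAt (fun t ↦ ∑ j, A t i j * C t j k)
      (∑ j, (A' i j * C t₀ j k + A t₀ i j * C' j k)) t₀ :=
    .fun_sum fun j _ ↦ (hasDerivAt_matrix.1 hA i j).fun_mul (hasDerivAt_matrix.1 hC j k)
  simpa only [Matrix.add_apply, mul_apply, ← Finset.sum_add_distrib] using hsum

variable [Fintype n] [DecidableEq n] [NormedCommRing R] [HasSummableGeomSeries R]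

theorem continuousAt_matrix_inv_of_isUnit_det {A : Matrix n n R} (hA : IsUnit A.det) :
    ContinuousAt Inv.inv A := by
  obtain ⟨u, hu⟩ := hA
  exact continuousAt_matrix_inv A (hu ▸ NormedRing.inverse_continuousAt u)

theorem eventually_isUnit_matrix_det {A : Matrix n n R} (hA : IsUnit A.det) :
    ∀ᶠ C in 𝓝 A, IsUnit C.det :=
  continuous_id.matrix_det.continuousAt.eventually (Units.isOpen.mem_nhds hA)

variable [NormedAlgebra 𝕜 R]

theorem hasDerivAt_matrix_inv {S : 𝕜 → Matrix n n R} {S' : Matrix n n R}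
    (hS : HasDerivAt S S' t₀) (hdet : IsUnit (S t₀).det) :
    HasDerivAt (fun t ↦ (S t)⁻¹) (-((S t₀)⁻¹ * S' * (S t₀)⁻¹)) t₀ := by
  have hS_tendsto : Tendsto S (𝓝[≠] t₀) (𝓝 (S t₀)) :=
    hS.continuousAt.tendsto.mono_left nhdsWithin_le_nhds
  have hinv : Tendsto (fun t ↦ (S t)⁻¹) (𝓝[≠] t₀) (𝓝 (S t₀)⁻¹) :=
    (continuousAt_matrix_inv_of_isUnit_det hdet).tendsto.comp hS_tendsto
  refine hasDerivAt_iff_tendsto_slope.2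
    (((hinv.mul hS.tendsto_slope).mul_const (S t₀)⁻¹).neg.congr' ?_)
  filter_upwards [hS_tendsto.eventually (eventually_isUnit_matrix_det hdet)] with t ht
  exact (slope_matrix_inv hdet ht).symm

theorem hasDerivAt_mul_inv_mul_transpose [Finite m] {G : 𝕜 → Matrix m n R} {S : 𝕜 → Matrix n n R}
    {G' : Matrix m n R} {S' : Matrix n n R} (hG : HasDerivAt G G' t₀) (hS : HasDerivAt S S' t₀)
    (hsymm : (S t₀).IsSymm) (hdet : IsUnit (S t₀).det) {B : Matrix m n R}
    (hB : B = -(G t₀ * (S t₀)⁻¹)) :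
    HasDerivAt (fun t ↦ G t * (S t)⁻¹ * (G t)ᵀ) (-(G' * Bᵀ) - B * S' * Bᵀ - B * G'ᵀ) t₀ := by
  have hBt : Bᵀ = -((S t₀)⁻¹ * (G t₀)ᵀ) := by
    rw [hB, transpose_neg, transpose_mul, transpose_nonsing_inv, hsymm.eq]
  convert hasDerivAt_matrix_mul (hasDerivAt_matrix_mul hG (hasDerivAt_matrix_inv hS hdet))
    (hasDerivAt_matrix_transpose hG) using 1
  rw [hBt, hB]
  simp only [Matrix.mul_neg, Matrix.neg_mul, Matrix.add_mul, Matrix.mul_assoc]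
  abel

theorem lyapunov_equation_for_sigma_dot_general {Γ0 Γ1 S : 𝕜 → Matrix n n R}
    {Γ0' Γ1' S' : Matrix n n R} (hΓ0 : HasDerivAt Γ0 Γ0' t₀) (hΓ1 : HasDerivAt Γ1 Γ1' t₀)
    (hS : HasDerivAt S S' t₀) (hsymm : (S t₀).IsSymm) (hdet : IsUnit (S t₀).det)
    (hmoment : ∀ᶠ t in 𝓝 t₀, Γ0 t = S t + Γ1 t * (S t)⁻¹ * (Γ1 t)ᵀ)
    {B : Matrix n n R} (hB : B = -(Γ1 t₀ * (S t₀)⁻¹)) :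
    S' - B * S' * Bᵀ = Γ0' + Γ1' * Bᵀ + B * Γ1'ᵀ := by
  have hquad := hasDerivAt_mul_inv_mul_transpose hΓ1 hS hsymm hdet hB
  have hderiv : Γ0' = S' + (-(Γ1' * Bᵀ) - B * S' * Bᵀ - B * Γ1'ᵀ) :=
    hΓ0.unique ((hS.fun_add hquad).congr_of_eventuallyEq hmoment)
  rw [hderiv]
  abel

end MatrixDeriv

/-- Differentiating the moment equation `Γ0 = Σ + Γ1 Σ⁻¹ Γ1ᵀ` with `B = −Γ1 Σ⁻¹` yields
the discrete-time Lyapunov equation `Σ̇ − B Σ̇ Bᵀ = Γ̇0 + Γ̇1 Bᵀ + B Γ̇1ᵀ`. -/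
theorem lyapunov_equation_for_sigma_dot (d : ℕ) (t₀ : ℝ)
    (Γ0 Γ1 S : ℝ → Matrix (Fin d) (Fin d) ℝ)
    (Γ0' Γ1' S' : Matrix (Fin d) (Fin d) ℝ)
    (hΓ0 : HasDerivAt Γ0 Γ0' t₀) (hΓ1 : HasDerivAt Γ1 Γ1' t₀)
    (hS : HasDerivAt S S' t₀)
    (hnbd : ∀ᶠ t in nhds t₀,
      (S t).IsSymm ∧ IsUnit (S t).det ∧ Γ0 t = S t + Γ1 t * (S t)⁻¹ * (Γ1 t)ᵀ)
    (B : Matrix (Fin d) (Fin d) ℝ) (hB : B = -(Γ1 t₀ * (S t₀)⁻¹)) :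
    S' - B * S' * Bᵀ = Γ0' + Γ1' * Bᵀ + B * Γ1'ᵀ := by
  obtain ⟨hsymm, hdet, -⟩ := hnbd.self_of_nhds
  exact lyapunov_equation_for_sigma_dot_general hΓ0 hΓ1 hS hsymm hdet (hnbd.mono fun _ h ↦ h.2.2) hB
end
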